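/- There exists a 2-(24,4,1) packing with 42 blocks whose leave is a vertex-disjoint union of one cycle of length 4 and four cycles of length 5, covering all 24 points (leave type 4^1 5^4). -/

import Mathlib

/-!
The theorem is witnessed by an explicit packing. Number the points so that the leave consists of the
4-cycle `(0 1 2 3)` and the 5-cycles on the four consecutive intervals `{4 + 5 j, …, 8 + 5 j}`, and
let `σ` be the permutation of order 4 that rotates the 4-cycle by one step and moves each 5-cycle
onto the next one (`x ↦ x + 5`, cyclically on `{4, …, 23}`). The packing is invariant under `σ`.
Invariance forces the pairs `{x, σ² x}` into blocks fixed by `σ²`, which form 3 orbits of size 2;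
the other blocks form 9 orbits of size 4, for `3 * 2 + 9 * 4 = 42` blocks in total.
All required properties of these blocks are finite checks, evaluated in the kernel; `σ` only
explains the structure of the list and plays no role in the verification.
-/

/-- A 2-(24,4,1) packing: a collection of 4-element blocks on 24 points such that
every pair of distinct points lies in at most one block. -/
def IsPacking (B : Finset (Finset (Fin 24))) : Prop :=
  (∀ b ∈ B, b.card = 4) ∧
  ∀ p q : Fin 24, p ≠ q → ∀ b₁ ∈ B, ∀ b₂ ∈ B,
    p ∈ b₁ → q ∈ b₁ → p ∈ b₂ → q ∈ b₂ → b₁ = b₂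

/-- Adjacency in the leave of a packing: the pair of distinct points is covered by no block. -/
def LeaveAdj (B : Finset (Finset (Fin 24))) (p q : Fin 24) : Prop :=
  p ≠ q ∧ ∀ b ∈ B, ¬ (p ∈ b ∧ q ∈ b)

/-- The leave of the packing `B` is a vertex-disjoint union of cycles whose lengths are
given by the list `L`, covering all 24 points. -/
def LeaveIsCycleType (B : Finset (Finset (Fin 24))) (L : List ℕ) : Prop :=
  ∃ f : (i : Fin L.length) → ZMod (L.get i) → Fin 24,
    Function.Bijective (fun x : Σ i : Fin L.length, ZMod (L.get i) => f x.1 x.2) ∧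
    ∀ p q : Fin 24, LeaveAdj B p q ↔
      ∃ i k, (p = f i k ∧ q = f i (k + 1)) ∨ (q = f i k ∧ p = f i (k + 1))

/-- The 42 blocks as lists of points. Each row is one orbit under the permutation `σ` acting by
`x ↦ x + 1` modulo 4 on `{0, 1, 2, 3}` and by `x ↦ x + 5` cyclically on `{4, …, 23}`. -/
def blockLists : List (List ℕ) :=
  [[0, 2, 13, 23], [1, 3, 18, 8],
   [4, 6, 14, 16], [9, 11, 19, 21],
   [5, 12, 15, 22], [10, 17, 20, 7],
   [0, 4, 20, 22], [1, 9, 5, 7], [2, 14, 10, 12], [3, 19, 15, 17],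
   [0, 5, 10, 16], [1, 10, 15, 21], [2, 15, 20, 6], [3, 20, 5, 11],
   [0, 6, 9, 18], [1, 11, 14, 23], [2, 16, 19, 8], [3, 21, 4, 13],
   [0, 7, 12, 19], [1, 12, 17, 4], [2, 17, 22, 9], [3, 22, 7, 14],
   [0, 8, 11, 15], [1, 13, 16, 20], [2, 18, 21, 5], [3, 23, 6, 10],
   [0, 14, 17, 21], [1, 19, 22, 6], [2, 4, 7, 11], [3, 9, 12, 16],
   [4, 9, 15, 23], [9, 14, 20, 8], [14, 19, 5, 13], [19, 4, 10, 18],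
   [5, 8, 17, 23], [10, 13, 22, 8], [15, 18, 7, 13], [20, 23, 12, 18],
   [6, 8, 12, 21], [11, 13, 17, 6], [16, 18, 22, 11], [21, 23, 7, 16]]

/-- The set of points occurring in a list of natural numbers. -/
def toBlock (l : List ℕ) : Finset (Fin 24) :=
  Finset.univ.filter fun x => x.val ∈ l

theorem mem_toBlock {l : List ℕ} {x : Fin 24} : x ∈ toBlock l ↔ x.val ∈ l := by
  simp [toBlock]

/-- The packing whose blocks are the point sets of the lists in `blockLists`. -/
def blocks : Finset (Finset (Fin 24)) :=
  (blockLists.map toBlock).toFinset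

theorem mem_blocks {b : Finset (Fin 24)} : b ∈ blocks ↔ ∃ l ∈ blockLists, toBlock l = b := by
  simp [blocks]

/-- The parametrization of the cycles of the leave: cycle 0 is `0, 1, 2, 3`, and cycle `i ≥ 1`
runs through the five consecutive points starting at `5 * i - 1`. The subtraction truncates to `0`
at `i = 0`, which is the first point of cycle 0. -/
def cyclePoint (i : Fin [4, 5, 5, 5, 5].length) (k : ZMod ([4, 5, 5, 5, 5].get i)) : Fin 24 :=
  Fin.ofNat 24 (5 * i.val - 1 + k.val)

instance cycleLength_neZero (i : Fin [4, 5, 5, 5, 5].length) :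
    NeZero ([4, 5, 5, 5, 5].get i) :=
  ⟨by revert i; decide⟩

theorem toBlock_card : ∀ l ∈ blockLists, (toBlock l).card = 4 := by decide +kernel

theorem blockLists_pairwise_exists :
    blockLists.Pairwise fun l m => ∃ x : Fin 24, x.val ∈ l ∧ x.val ∉ m := by
  decide +kernel

theorem blocks_card : blocks.card = 42 := by
  have h : (blockLists.map toBlock).Nodup := by
    refine List.pairwise_map.mpr (blockLists_pairwise_exists.imp ?_)
    rintro l m ⟨x, hl, hm⟩ h
    exact hm (mem_toBlock.mp (h ▸ mem_toBlock.mpr hl))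
  rw [blocks, List.toFinset_card_of_nodup h, List.length_map]
  rfl

/-- Two distinct points lie together in at most one of the listed blocks. The hypotheses are
ordered so that the inner loop over `m` is only evaluated for lists `l` containing both points. -/
theorem blockLists_unique : ∀ p q : Fin 24, p ≠ q → ∀ l ∈ blockLists, p.val ∈ l → q.val ∈ l →
    ∀ m ∈ blockLists, p.val ∈ m → q.val ∈ m → l = m := by
  decide +kernel

theorem blocks_isPacking : IsPacking blocks := by
  refine ⟨fun b hb => ?_, fun p q hpq b₁ h₁ b₂ h₂ hp₁ hq₁ hp₂ hq₂ => ?_⟩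
  · obtain ⟨l, hl, rfl⟩ := mem_blocks.mp hb
    exact toBlock_card l hl
  · obtain ⟨l, hl, rfl⟩ := mem_blocks.mp h₁
    obtain ⟨m, hm, rfl⟩ := mem_blocks.mp h₂
    rw [mem_toBlock] at hp₁ hq₁ hp₂ hq₂
    rw [blockLists_unique p q hpq l hl hp₁ hq₁ m hm hp₂ hq₂]

theorem cyclePoint_bijective :
    Function.Bijective
      (fun x : Σ i : Fin [4, 5, 5, 5, 5].length, ZMod ([4, 5, 5, 5, 5].get i) =>
        cyclePoint x.1 x.2) := by
  decide +kernel

theorem uncovered_iff : ∀ p q : Fin 24,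
    (p ≠ q ∧ ∀ l ∈ blockLists, ¬ (p.val ∈ l ∧ q.val ∈ l)) ↔
    ∃ i k, (p = cyclePoint i k ∧ q = cyclePoint i (k + 1)) ∨
      (q = cyclePoint i k ∧ p = cyclePoint i (k + 1)) := by
  decide +kernel

theorem leaveAdj_blocks_iff (p q : Fin 24) : LeaveAdj blocks p q ↔
    ∃ i k, (p = cyclePoint i k ∧ q = cyclePoint i (k + 1)) ∨
      (q = cyclePoint i k ∧ p = cyclePoint i (k + 1)) := by
  rw [← uncovered_iff, LeaveAdj]
  simp only [mem_blocks, forall_exists_index, and_imp, forall_apply_eq_imp_iff₂, mem_toBlock]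

/-- There is a 2-(24,4,1) packing with 42 blocks whose leave is a vertex-disjoint
union of cycles of lengths [4, 5, 5, 5, 5], covering all 24 points. -/
theorem exists_max_packing_with_leave_type :
    ∃ B : Finset (Finset (Fin 24)), IsPacking B ∧ B.card = 42 ∧
      LeaveIsCycleType B [4, 5, 5, 5, 5] :=
  ⟨blocks, blocks_isPacking, blocks_card, cyclePoint, cyclePoint_bijective, leaveAdj_blocks_iff⟩
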